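/- Let 𝒫 be the Petersen graph, realized as the Kneser graph K(5,2): vertices are the 2-element subsets of a 5-element set, with two vertices adjacent if and only if the corresponding subsets are disjoint. Then there is a Marcello step from 𝒫 to the complete graph K_10 on its 10 vertices; i.e., ϖ(𝒫) = 1. -/

import Mathlib

open SimpleGraph

attribute [local instance] Classical.propDecidable

/-- The degree of a vertex. -/
noncomputable def mdeg {V : Type*} (G : SimpleGraph V) (v : V) : ℕ :=
  (G.neighborSet v).ncard

/-- `G'` is obtained from `G` by a Marcello step. -/
def MarcelloStep {V : Type*} [Fintype V] (G G' : SimpleGraph V) : Prop :=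
  G ≤ G' ∧ ∃ f : Sym2 V → V,
    (∀ e ∈ G'.edgeSet \ G.edgeSet, f e ∈ e) ∧
    (∀ v : V, (∃ e ∈ G'.edgeSet \ G.edgeSet, f e = v) →
        0 < mdeg G v ∧ mdeg G v < Fintype.card V - 1) ∧
    (∀ v : V, ((G'.edgeSet \ G.edgeSet) ∩ {e | f e = v}).ncard ≤ mdeg G v)

/-- There is a Marcello chain of length `k` from `G` to `H`. -/
def MarcelloChain {V : Type*} [Fintype V] (G H : SimpleGraph V) (k : ℕ) : Prop :=
  ∃ c : ℕ → SimpleGraph V, c 0 = G ∧ c k = H ∧ ∀ i < k, MarcelloStep (c i) (c (i + 1))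

/-- The Marcello number `ϖ(G)`. -/
noncomputable def marcelloNumber {V : Type*} [Fintype V] (G : SimpleGraph V) : ℕ :=
  sInf {k | MarcelloChain G (⊤ : SimpleGraph V) k}

/-- The sum of degrees over vertices `v` with `0 < deg v < n - 1`. -/
noncomputable def marcelloSum {V : Type*} [Fintype V] (G : SimpleGraph V) : ℕ :=
  ∑ v ∈ Finset.univ.filter
      (fun v => 0 < mdeg G v ∧ mdeg G v < Fintype.card V - 1), mdeg G v
/-- The Petersen graph, realized as the Kneser graph `K(5,2)`: vertices are `2`-element
subsets of a `5`-element set, adjacent iff disjoint. -/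
def petersenGraph : SimpleGraph {s : Finset (Fin 5) // s.card = 2} where
  Adj a b := Disjoint (a : Finset (Fin 5)) (b : Finset (Fin 5))
  symm := ⟨fun a b h => h.symm⟩
  loopless := ⟨fun a h => by
    have h' : Disjoint (a : Finset (Fin 5)) (a : Finset (Fin 5)) := h
    rw [disjoint_self] at h'
    have h2 := a.2
    rw [h'] at h2
    simp at h2⟩

/-!
A vertex `v` of a graph on `n` vertices is missing `n - 1 - deg v` edges. If this is at most
`2 * deg v` for every `v`, then one Marcello step completes the graph: each missing edge has two
endpoints, so any set `S` of missing edges satisfies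
`2 * |S| ≤ ∑ (n - 1 - deg v) ≤ 2 * ∑ deg v`, summed over the endpoints `v` of `S`. This is Hall's
condition for choosing an initiator of each missing edge when every `v` is available in `deg v`
copies. For the Petersen graph the bound is tight: `10 - 1 - 3 = 2 * 3`.
-/

section Hall

variable {ι α : Type*} [DecidableEq α]

theorem exists_forall_mem_and_ncard_fiber_le (t : ι → Finset α) (c : α → ℕ)
    (h : ∀ s : Finset ι, s.card ≤ ∑ a ∈ s.biUnion t, c a) :
    ∃ f : ι → α, (∀ i, f i ∈ t i) ∧ ∀ a, {i | f i = a}.ncard ≤ c a := by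
  let copies (i : ι) : Finset (Σ a, Fin (c a)) := (t i).sigma fun _ ↦ Finset.univ
  have hall (s : Finset ι) : s.card ≤ (s.biUnion copies).card := by
    have : s.biUnion copies = (s.biUnion t).sigma fun _ ↦ Finset.univ := by
      ext; simp [copies]
    simpa [this] using h s
  obtain ⟨g, hg, hmem⟩ :=
    (Finset.all_card_le_biUnion_card_iff_exists_injective copies).1 hall
  refine ⟨fun i ↦ (g i).1, fun i ↦ (Finset.mem_sigma.1 (hmem i)).1, fun a ↦ ?_⟩
  calc {i | (g i).1 = a}.ncard
      ≤ (Set.range fun j : Fin (c a) ↦ (⟨a, j⟩ : Σ a, Fin (c a))).ncard :=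
        Set.ncard_le_ncard_of_injOn g (by rintro i rfl; exact ⟨(g i).2, rfl⟩) hg.injOn
    _ = c a := (Set.ncard_range_of_injective sigma_mk_injective).trans (Nat.card_fin _)

theorem card_le_sum_biUnion_of_card_filter_mem_le [Fintype ι] {t : ι → Finset α} {c : α → ℕ}
    {d : ℕ} (hd : 0 < d) (ht : ∀ i, d ≤ (t i).card)
    (hc : ∀ a, (Finset.univ.filter fun i ↦ a ∈ t i).card ≤ d * c a) (s : Finset ι) :
    s.card ≤ ∑ a ∈ s.biUnion t, c a := by
  refine Nat.le_of_mul_le_mul_left ?_ hd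
  calc d * s.card
      ≤ ∑ i ∈ s, (t i).card := by
        simpa [mul_comm] using s.card_nsmul_le_sum _ d fun i _ ↦ ht i
    _ = ∑ i ∈ s, ((s.biUnion t).filter fun a ↦ a ∈ t i).card :=
        Finset.sum_congr rfl fun i hi ↦ by
          rw [Finset.filter_mem_eq_inter,
            Finset.inter_eq_right.2 (Finset.subset_biUnion_of_mem t hi)]
    _ = ∑ a ∈ s.biUnion t, (s.filter fun i ↦ a ∈ t i).card :=
        Finset.sum_card_bipartiteAbove_eq_sum_card_bipartiteBelow fun i a ↦ a ∈ t i
    _ ≤ ∑ a ∈ s.biUnion t, d * c a :=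
        Finset.sum_le_sum fun a _ ↦
          (Finset.card_le_card (Finset.filter_subset_filter _ s.subset_univ)).trans (hc a)
    _ = d * ∑ a ∈ s.biUnion t, c a := (Finset.mul_sum ..).symm

end Hall

section Graph

variable {V : Type*}

theorem mdeg_eq_degree (G : SimpleGraph V) (v : V) [Fintype (G.neighborSet v)] :
    mdeg G v = G.degree v := by
  rw [mdeg, Set.ncard_eq_toFinset_card', ← card_neighborFinset_eq_degree, neighborFinset]

theorem mdeg_pos_of_adj [Finite V] {G : SimpleGraph V} {v w : V} (h : G.Adj v w) :
    0 < mdeg G v :=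
  (Set.ncard_pos (Set.toFinite _)).2 ⟨w, h⟩

theorem mdeg_compl [Fintype V] (G : SimpleGraph V) (v : V) :
    mdeg Gᶜ v = Fintype.card V - 1 - mdeg G v := by
  rw [mdeg_eq_degree, mdeg_eq_degree, degree_compl]

theorem mdeg_lt_of_not_adj [Fintype V] {G : SimpleGraph V} {v w : V} (hne : v ≠ w)
    (h : ¬ G.Adj v w) : mdeg G v < Fintype.card V - 1 := by
  have := mdeg_pos_of_adj ((G.compl_adj v w).2 ⟨hne, h⟩)
  rw [mdeg_compl] at this
  omega

theorem card_filter_mem_edge_eq_mdeg [Fintype V] (G : SimpleGraph V) (v : V) :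
    (Finset.univ.filter fun e : G.edgeSet ↦ v ∈ e.1).card = mdeg G v := by
  rw [mdeg_eq_degree, ← card_incidenceFinset_eq_degree, incidenceFinset_eq_filter,
    ← Finset.card_map (Function.Embedding.subtype _)]
  congr 1
  ext e
  simp [and_comm]

theorem exists_endpoint_ncard_fiber_le [Finite V] (G : SimpleGraph V) (c : V → ℕ)
    (h : ∀ v, mdeg G v ≤ 2 * c v) :
    ∃ f : Sym2 V → V, (∀ e ∈ G.edgeSet, f e ∈ e) ∧
      ∀ v, (G.edgeSet ∩ {e | f e = v}).ncard ≤ c v := by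
  have := Fintype.ofFinite V
  have hcard (e : G.edgeSet) : 2 ≤ e.1.toFinset.card :=
    (Sym2.card_toFinset_of_not_isDiag _ (G.not_isDiag_of_mem_edgeSet e.2)).ge
  have hmdeg (v : V) :
      (Finset.univ.filter fun e : G.edgeSet ↦ v ∈ e.1.toFinset).card ≤ 2 * c v := by
    simpa only [Sym2.mem_toFinset, card_filter_mem_edge_eq_mdeg] using h v
  obtain ⟨g, hmem, hfiber⟩ := exists_forall_mem_and_ncard_fiber_le _ c
    (card_le_sum_biUnion_of_card_filter_mem_le two_pos hcard hmdeg)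
  let f : Sym2 V → V := Function.extend Subtype.val g fun e ↦ e.out.1
  have hf (e : G.edgeSet) : f e = g e := Subtype.val_injective.extend_apply g _ e
  refine ⟨f, fun e he ↦ ?_, fun v ↦ ?_⟩
  · simpa [hf ⟨e, he⟩] using hmem ⟨e, he⟩
  · have himage : G.edgeSet ∩ {e | f e = v} = Subtype.val '' {e | g e = v} := by
      ext e
      simp [← hf, and_comm]
    rw [himage, Set.ncard_image_of_injective _ Subtype.val_injective]
    exact hfiber v

variable [Fintype V]

theorem marcelloStep_of_mdeg_sdiff_le {G G' : SimpleGraph V} (hle : G ≤ G')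
    (h : ∀ v, mdeg (G' \ G) v ≤ 2 * mdeg G v) : MarcelloStep G G' := by
  obtain ⟨f, hmem, hfiber⟩ := exists_endpoint_ncard_fiber_le (G' \ G) (mdeg G) h
  rw [edgeSet_sdiff] at hmem hfiber
  refine ⟨hle, f, hmem, ?_, hfiber⟩
  rintro v ⟨e, he, rfl⟩
  obtain ⟨w, hw⟩ := Sym2.mem_iff_exists.1 (hmem e he)
  have hadj : (G' \ G).Adj (f e) w := by
    rwa [← mem_edgeSet, edgeSet_sdiff, ← hw]
  have hpos : 0 < mdeg (G' \ G) (f e) := mdeg_pos_of_adj hadj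
  exact ⟨by linarith [h (f e)], mdeg_lt_of_not_adj hadj.ne hadj.2⟩

theorem marcelloStep_top_of_card_le {G : SimpleGraph V}
    (h : ∀ v, Fintype.card V ≤ 3 * mdeg G v + 1) : MarcelloStep G ⊤ :=
  marcelloStep_of_mdeg_sdiff_le le_top fun v ↦ by
    rw [top_sdiff, mdeg_compl]
    have := h v
    omega

theorem marcelloChain_zero_iff {G H : SimpleGraph V} : MarcelloChain G H 0 ↔ G = H :=
  ⟨fun ⟨_, h₀, h₁, _⟩ ↦ h₀.symm.trans h₁, fun h ↦ ⟨fun _ ↦ G, rfl, h, by simp⟩⟩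

theorem marcelloChain_one_iff {G H : SimpleGraph V} : MarcelloChain G H 1 ↔ MarcelloStep G H := by
  constructor
  · rintro ⟨c, rfl, rfl, hc⟩
    exact hc 0 one_pos
  · exact fun h ↦ ⟨fun i ↦ if i = 0 then G else H, rfl, rfl, by simpa using h⟩

theorem marcelloChain_marcelloNumber {G : SimpleGraph V} {k : ℕ} (h : MarcelloChain G ⊤ k) :
    MarcelloChain G ⊤ (marcelloNumber G) :=
  Nat.sInf_mem (s := {k | MarcelloChain G ⊤ k}) ⟨k, h⟩

theorem marcelloNumber_eq_one_iff {G : SimpleGraph V} :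
    marcelloNumber G = 1 ↔ G ≠ ⊤ ∧ MarcelloStep G ⊤ := by
  rw [← marcelloChain_one_iff, ne_eq, ← marcelloChain_zero_iff]
  constructor
  · intro h
    obtain ⟨k, hk⟩ := Nat.nonempty_of_sInf_eq_succ h
    exact ⟨Nat.notMem_of_lt_sInf (h ▸ one_pos), h ▸ marcelloChain_marcelloNumber hk⟩
  · rintro ⟨h₀, h₁⟩
    have hle : marcelloNumber G ≤ 1 := Nat.sInf_le h₁
    have hne : marcelloNumber G ≠ 0 := fun h ↦ h₀ (h ▸ marcelloChain_marcelloNumber h₁)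
    exact hle.antisymm (Nat.one_le_iff_ne_zero.2 hne)

theorem marcello_petersen_general {G : SimpleGraph V} (hG : G ≠ ⊤)
    (h : ∀ v, Fintype.card V ≤ 3 * mdeg G v + 1) :
    MarcelloStep G ⊤ ∧ marcelloNumber G = 1 :=
  have hstep := marcelloStep_top_of_card_le h
  ⟨hstep, marcelloNumber_eq_one_iff.2 ⟨hG, hstep⟩⟩

end Graph

theorem ncard_setOf_disjoint_eq_choose {α : Type*} [Fintype α] (k : ℕ) (s : Finset α) :
    {t : {t : Finset α // t.card = k} | Disjoint s t}.ncard =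
      (Fintype.card α - s.card).choose k := by
  have himage : Subtype.val '' {t : {t : Finset α // t.card = k} | Disjoint s t} =
      (sᶜ.powersetCard k : Set (Finset α)) := by
    ext t
    simp [Finset.subset_compl_iff_disjoint_left, and_comm]
  rw [← Set.ncard_image_of_injective _ Subtype.val_injective, himage, Set.ncard_coe_finset,
    Finset.card_powersetCard, Finset.card_compl]

theorem mdeg_petersenGraph (v : {s : Finset (Fin 5) // s.card = 2}) :
    mdeg petersenGraph v = 3 := by
  have h := ncard_setOf_disjoint_eq_choose 2 v.1
  rw [v.2, Fintype.card_fin] at h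
  exact h

theorem petersenGraph_ne_top : petersenGraph ≠ ⊤ := by
  intro htop
  let v : {s : Finset (Fin 5) // s.card = 2} := ⟨{0, 1}, by decide⟩
  let w : {s : Finset (Fin 5) // s.card = 2} := ⟨{0, 2}, by decide⟩
  have hne : v.1 ≠ w.1 := by decide
  have hdisj : Disjoint v.1 w.1 := by
    change petersenGraph.Adj v w
    rw [htop, top_adj]
    exact ne_of_apply_ne _ hne
  simp [v, w] at hdisj

/-- One Marcello step completes the Petersen graph: `ϖ(𝒫) = 1`. -/
theorem marcello_petersen :
    MarcelloStep petersenGraph (⊤ : SimpleGraph {s : Finset (Fin 5) // s.card = 2}) ∧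
      marcelloNumber petersenGraph = 1 :=
  marcello_petersen_general petersenGraph_ne_top fun v ↦ by
    rw [mdeg_petersenGraph, Fintype.card_finset_len, Fintype.card_fin]; decide
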